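/- Let n_e ∈ C²(ℝ) satisfy n_e(0) = 1, n_e'(0) = −1, and n_e'(Φ) < 0 for all Φ ∈ ℝ, let β ∈ (0,1), and set η(β) := β²/(2 − β²). Then there exist constants δ₀ > 0 and C > 0, both independent of β, such that the following holds. Let Φ_b > 0 and let Φ^s ∈ C¹([0,∞)) satisfy 0 ≤ Φ^s(x) ≤ Φ_b and |∂_xΦ^s(x)| ≤ Φ_b; let n ∈ C¹([0,∞)) with ∫₀^∞ e^{βx}(|n|² + |∂_x n|²) dx < ∞; and let φ ∈ C²([0,∞)) solve ∂_{xx}φ = n − (n_e(Φ^s + φ) − n_e(Φ^s)) on (0,∞) with φ(0) = 0, lim_{x→∞} φ(x) = 0 and ∫₀^∞ e^{βx} Σ_{j=0}^{2} |∂_x^j φ|² dx < ∞. If Φ_b + ‖n‖_{H¹(0,∞)} ≤ δ₀, then, writing ‖e^{βx/2} g‖² := ∫₀^∞ e^{βx}|g|² dx: (i) ‖e^{βx/2} φ‖² + 2(1 + η(β)) ‖e^{βx/2} ∂_xφ‖² ≤ (1 + η(β))² ‖e^{βx/2} n‖² + C (Φ_b + ‖n‖_{H¹}) ‖e^{βx/2}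 n‖²; and (ii) ‖e^{βx/2} ∂_{xx}φ‖² ≤ (1 + β²(1 + η(β))²) ‖e^{βx/2} n‖² + C (Φ_b + ‖n‖_{H¹}) ‖e^{βx/2} n‖². -/

import Mathlib

open MeasureTheory Real Set Filter

/-!
Testing `φ'' = n + φ + e`, where `|e| ≤ k |φ|` with `k` small, against `e^{βx} φ` and using
`∫ e^{βx} (φ'² + φ φ'') = (β²/2) ∫ e^{βx} φ²` together with `2θ |φ n| ≤ φ² + θ² n²` for
`θ = 1 + η(β) = 2/(2 - β²)` gives (i) up to `O(k)`; expanding `(φ'' - φ)² = (n + e)²` and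
inserting (i) gives (ii). That the semilinear equation has this form with `k = O(Φ_b + ‖n‖_{H¹})`
follows from the Taylor expansion of `n_e` at `0` once `φ` is known to be pointwise small, which is
the maximum principle combined with the Sobolev embedding of `H¹` into `L^∞`.
-/

/-- The factor `η(β)` in the sharp constants, meaningful for `β² < 2`. -/
noncomputable def bohmEta (β : ℝ) : ℝ := β ^ 2 / (2 - β ^ 2)

/-- The integral `∫₀^∞ e^{βx} F(x) dx` with values in `[0, ∞]`, which sees only the positive part
of `F`; for `F = f²` this is the squared weighted norm `‖e^{βx/2} f‖²`. -/
noncomputable def expWeightedLIntegral (β : ℝ) (F : ℝ → ℝ) : ENNReal :=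
  ∫⁻ x in Ioi (0 : ℝ), ENNReal.ofReal (exp (β * x) * F x)

/-- The measure `e^{βx} dx` on the half-line `(0, ∞)`, whose `L²` space carries the weighted norm
`‖e^{βx/2} f‖`. -/
noncomputable def expWeightedMeasure (β : ℝ) : Measure ℝ :=
  (volume.restrict (Ioi 0)).withDensity fun x => ENNReal.ofReal (exp (β * x))

/-- The norm `‖n‖_{H¹(0,∞)}`; the junk value of the Bochner integral makes it `0` when `n` or `n'`
fails to be square integrable. -/
noncomputable def halfLineH1Norm (n : ℝ → ℝ) : ℝ :=
  √(∫ x in Ioi (0 : ℝ), (n x ^ 2 + deriv n x ^ 2))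

/-- `φ` is a classical solution, vanishing at `0` and at infinity, of the Poisson equation on the
half-line for the perturbation of the stationary potential `Φs`, with electron density `ne` and
perturbed ion density `n`. -/
structure IsPotentialPerturbation (ne Φs n φ : ℝ → ℝ) : Prop where
  contDiff : ContDiff ℝ 2 φ
  deriv_deriv_eq : ∀ x > 0, deriv (deriv φ) x = n x - (ne (Φs x + φ x) - ne (Φs x))
  map_zero : φ 0 = 0
  tendsto_zero : Tendsto φ atTop (nhds 0)

section Eta

variable {β : ℝ}

theorem bohmEta_nonneg (hβ : β ^ 2 < 2) : 0 ≤ bohmEta β :=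
  div_nonneg (sq_nonneg β) (sub_nonneg.2 hβ.le)

theorem one_add_bohmEta_mul_sq (hβ : β ^ 2 < 2) : (1 + bohmEta β) * β ^ 2 = 2 * bohmEta β := by
  have : 2 - β ^ 2 ≠ 0 := (sub_pos.2 hβ).ne'
  rw [bohmEta]
  field_simp
  ring

theorem bohmEta_le_bohmEta {b : ℝ} (hb : b ^ 2 < 2) (hβb : β ^ 2 ≤ b ^ 2) :
    bohmEta β ≤ bohmEta b := by
  have : 0 < 2 - b ^ 2 := sub_pos.2 hb
  unfold bohmEta
  gcongr

end Eta

section HalfLine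

theorem integral_Ioi_of_hasDerivAt_of_integrableOn {F F' : ℝ → ℝ} {a : ℝ}
    (hderiv : ∀ x ∈ Ici a, HasDerivAt F (F' x) x) (hF' : IntegrableOn F' (Ioi a))
    (hF : IntegrableOn F (Ioi a)) : ∫ x in Ioi a, F' x = -F a := by
  have hlim := tendsto_zero_of_hasDerivAt_of_integrableOn_Ioi
    (fun x hx => hderiv x (Ioi_subset_Ici_self hx)) hF' hF
  rw [integral_Ioi_of_hasDerivAt_of_tendsto' hderiv hF' hlim, zero_sub]

theorem sq_le_integral_Ioi_sq_add_sq {f f' : ℝ → ℝ} {a : ℝ}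
    (hderiv : ∀ x ∈ Ici a, HasDerivAt f (f' x) x) (hf : MemLp f 2 (volume.restrict (Ioi a)))
    (hf' : MemLp f' 2 (volume.restrict (Ioi a))) :
    f a ^ 2 ≤ ∫ x in Ioi a, (f x ^ 2 + f' x ^ 2) := by
  have hmul : IntegrableOn (fun x => 2 * (f x * f' x)) (Ioi a) :=
    (hf.integrable_mul hf').const_mul 2
  have hsq : ∀ x ∈ Ici a, HasDerivAt (fun x => f x ^ 2) (2 * (f x * f' x)) x := fun x hx => by
    simpa [mul_assoc] using (hderiv x hx).fun_pow 2
  calc f a ^ 2 = ∫ x in Ioi a, -(2 * (f x * f' x)) := by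
        rw [integral_neg, integral_Ioi_of_hasDerivAt_of_integrableOn hsq hmul hf.integrable_sq,
          neg_neg]
    _ ≤ ∫ x in Ioi a, (f x ^ 2 + f' x ^ 2) :=
        integral_mono hmul.neg (hf.integrable_sq.add hf'.integrable_sq) fun x => by
          linarith [add_sq (f x) (f' x), sq_nonneg (f x + f' x)]

theorem abs_le_halfLineH1Norm {n : ℝ → ℝ} (hn : Differentiable ℝ n)
    (hn2 : MemLp n 2 (volume.restrict (Ioi 0)))
    (hn2' : MemLp (deriv n) 2 (volume.restrict (Ioi 0))) {x : ℝ} (hx : 0 ≤ x) :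
    |n x| ≤ halfLineH1Norm n := by
  have hsub : Ioi x ⊆ Ioi 0 := Ioi_subset_Ioi hx
  have hrestrict := Measure.restrict_mono_set volume hsub
  refine abs_le_sqrt ?_
  calc n x ^ 2 ≤ ∫ y in Ioi x, (n y ^ 2 + deriv n y ^ 2) :=
        sq_le_integral_Ioi_sq_add_sq (fun y _ => (hn y).hasDerivAt)
          (hn2.mono_measure hrestrict) (hn2'.mono_measure hrestrict)
    _ ≤ ∫ y in Ioi 0, (n y ^ 2 + deriv n y ^ 2) :=
        setIntegral_mono_set (hn2.integrable_sq.add hn2'.integrable_sq)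
          (Eventually.of_forall fun y => by positivity) hsub.eventuallyLE

theorem deriv_deriv_nonpos_of_isLocalMax {f : ℝ → ℝ} {a : ℝ} (h : IsLocalMax f a)
    (hc : ContinuousAt f a) : deriv (deriv f) a ≤ 0 := by
  by_contra! hpos
  have hmin := isLocalMin_of_deriv_deriv_pos hpos h.deriv_eq_zero hc
  have hconst : f =ᶠ[nhds a] fun _ => f a := by
    filter_upwards [h, hmin] with x hmax hmin using le_antisymm hmax hmin
  have hzero : deriv (deriv f) a = 0 := by simpa using hconst.deriv.deriv_eq
  exact hpos.ne' hzero

theorem le_of_deriv_deriv_pos_of_lt {f : ℝ → ℝ} {a l M : ℝ} (hf : Continuous f) (ha : f a ≤ M)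
    (hlim : Tendsto f atTop (nhds l)) (hl : l ≤ M)
    (hpos : ∀ x > a, M < f x → 0 < deriv (deriv f) x) {x : ℝ} (hx : a ≤ x) : f x ≤ M := by
  by_contra! hM
  have hfar : ∀ᶠ y in cocompact ℝ ⊓ 𝓟 (Ici a), f y ≤ f x := by
    rw [cocompact_eq_atBot_atTop, inf_sup_right, (disjoint_atBot_principal_Ici a).eq_bot,
      bot_sup_eq]
    exact (hlim.eventually_le_const (hl.trans_lt hM)).filter_mono inf_le_left
  obtain ⟨y, hy, hmax⟩ := hf.continuousOn.exists_isMaxOn' isClosed_Ici hx hfar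
  have hMy : M < f y := hM.trans_le (hmax hx)
  have hay : a < y := lt_of_le_of_ne hy fun h => (h ▸ ha).not_gt hMy
  exact (hpos y hay hMy).not_ge
    (deriv_deriv_nonpos_of_isLocalMax (hmax.isLocalMax (Ici_mem_nhds hay)) hf.continuousAt)

end HalfLine

section Linearization

theorem exists_norm_sub_sub_fderiv_le {E F : Type*} [NormedAddCommGroup E] [NormedSpace ℝ E]
    [NormedAddCommGroup F] [NormedSpace ℝ F] {f : E → F} {x : E} (hf : ContDiffAt ℝ 2 f x) :
    ∃ K > 0, ∃ r > 0, ∀ ε ≤ r, ∀ a ∈ Metric.closedBall x ε, ∀ b ∈ Metric.closedBall x ε,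
      ‖f b - f a - fderiv ℝ f x (b - a)‖ ≤ K * ε * ‖b - a‖ := by
  obtain ⟨K, t, ht, hK⟩ := (hf.fderiv_right (m := 1) le_rfl).exists_lipschitzOnWith
  have hdiff : ∀ᶠ y in nhds x, DifferentiableAt ℝ f y :=
    (hf.eventually (by simp)).mono fun y hy => hy.differentiableAt two_ne_zero
  obtain ⟨r, hr, hball⟩ := Metric.nhds_basis_closedBall.mem_iff.1 (inter_mem ht hdiff)
  refine ⟨K + 1, by positivity, r, hr, fun ε hε a ha b hb => ?_⟩
  have hsub := Metric.closedBall_subset_closedBall (x := x) hε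
  have hx : x ∈ t := mem_of_mem_nhds ht
  refine (convex_closedBall x ε).norm_image_sub_le_of_norm_fderiv_le'
    (fun y hy => (hball (hsub hy)).2) (fun y hy => ?_) ha hb
  calc ‖fderiv ℝ f y - fderiv ℝ f x‖ ≤ K * ‖y - x‖ := hK.norm_sub_le (hball (hsub hy)).1 hx
    _ ≤ (K + 1) * ε := by
        have := mem_closedBall_iff_norm.1 hy
        gcongr
        linarith

theorem exists_abs_sub_add_sub_le {g : ℝ → ℝ} (hg : ContDiffAt ℝ 2 g 0)
    (hg' : deriv g 0 = -1) :
    ∃ K > 0, ∃ r > 0, ∀ ε ≤ r, ∀ a ∈ Icc (-ε) ε, ∀ b ∈ Icc (-ε) ε,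
      |g b - g a + (b - a)| ≤ K * ε * |b - a| := by
  simpa only [Real.closedBall_eq_Icc, zero_sub, zero_add, fderiv_eq_smul_deriv, hg', smul_eq_mul,
    mul_neg_one, sub_neg_eq_add, norm_eq_abs] using exists_norm_sub_sub_fderiv_le hg

end Linearization

namespace IsPotentialPerturbation

variable {g Φ n φ : ℝ → ℝ}

theorem neg (h : IsPotentialPerturbation g Φ n φ) :
    IsPotentialPerturbation (fun s => -g (-s)) (-Φ) (-n) (-φ) where
  contDiff := h.contDiff.neg
  deriv_deriv_eq x hx := by
    have hderiv : deriv (-φ) = -deriv φ := deriv.neg'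
    rw [hderiv, deriv.neg, h.deriv_deriv_eq x hx]
    simp only [Pi.neg_apply, neg_add_rev, neg_neg, add_comm (φ x)]
    ring
  map_zero := by simp [h.map_zero]
  tendsto_zero := neg_zero (G := ℝ) ▸ h.tendsto_zero.neg

variable {m ρ H : ℝ}

theorem le_div (h : IsPotentialPerturbation g Φ n φ) (hg : Antitone g)
    (hgm : AntitoneOn (fun s => g s + m * s) (Icc (-(2 * ρ)) (2 * ρ))) (hm : 0 < m) (hH : 0 ≤ H)
    (hHρ : H < m * ρ) (hΦ : ∀ x > 0, |Φ x| ≤ ρ) (hn : ∀ x > 0, -H ≤ n x) {x : ℝ} (hx : 0 ≤ x) :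
    φ x ≤ H / m := by
  have hHm : 0 ≤ H / m := by positivity
  refine le_of_deriv_deriv_pos_of_lt h.contDiff.continuous (h.map_zero.trans_le hHm)
    h.tendsto_zero hHm (fun y hy hφy => ?_) hx
  obtain ⟨hΦl, hΦu⟩ := abs_le.1 (hΦ y hy)
  -- `φ y` is not yet known to be small, so `g` is compared at the truncation of `φ y` by `ρ`.
  set t := min (φ y) ρ
  have htρ : t ≤ ρ := min_le_right _ _
  have hHt : H / m < t := lt_min hφy ((div_lt_iff₀' hm).2 hHρ)
  have hmono : g (Φ y + φ y) ≤ g (Φ y + t) := hg (by gcongr; exact min_le_left _ _)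
  have hslope : g (Φ y + t) + m * (Φ y + t) ≤ g (Φ y) + m * Φ y :=
    hgm ⟨by linarith, by linarith⟩ ⟨by linarith, by linarith⟩ (by linarith)
  have hHmt : H < m * t := (div_lt_iff₀' hm).1 hHt
  rw [h.deriv_deriv_eq y hy]
  linarith [hn y hy]

theorem abs_le_div (h : IsPotentialPerturbation g Φ n φ) (hg : Antitone g)
    (hgm : AntitoneOn (fun s => g s + m * s) (Icc (-(2 * ρ)) (2 * ρ))) (hm : 0 < m)
    (hHρ : H < m * ρ) (hΦ : ∀ x > 0, |Φ x| ≤ ρ) (hn : ∀ x > 0, |n x| ≤ H) {x : ℝ} (hx : 0 ≤ x) :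
    |φ x| ≤ H / m := by
  have hH : 0 ≤ H := (abs_nonneg _).trans (hn 1 one_pos)
  have hg_neg : Antitone fun s => -g (-s) := fun a b hab => neg_le_neg (hg (neg_le_neg hab))
  have hgm_neg : AntitoneOn (fun s => -g (-s) + m * s) (Icc (-(2 * ρ)) (2 * ρ)) := by
    intro a ha b hb hab
    have := hgm ⟨neg_le_neg hb.2, neg_le.1 hb.1⟩ ⟨neg_le_neg ha.2, neg_le.1 ha.1⟩
      (neg_le_neg hab)
    simp only [mul_neg] at this ⊢
    linarith
  have hupper : φ x ≤ H / m :=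
    h.le_div hg hgm hm hH hHρ hΦ (fun y hy => (abs_le.1 (hn y hy)).1) hx
  have hlower : -φ x ≤ H / m :=
    h.neg.le_div hg_neg hgm_neg hm hH hHρ (fun y hy => by simpa using hΦ y hy)
      (fun y hy => neg_le_neg (abs_le.1 (hn y hy)).2) hx
  exact abs_le.2 ⟨neg_le.1 hlower, hupper⟩

end IsPotentialPerturbation

theorem exists_abs_deriv_deriv_sub_le {g : ℝ → ℝ} (hg : ContDiffAt ℝ 2 g 0) (hanti : Antitone g)
    (hg' : deriv g 0 = -1) :
    ∃ δ > 0, ∃ K > 0, ∀ {Φ n φ : ℝ → ℝ} {Φb H : ℝ}, IsPotentialPerturbation g Φ n φ →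
      (∀ x > 0, |Φ x| ≤ Φb) → (∀ x > 0, |n x| ≤ H) → Φb + H ≤ δ →
      ∀ x > 0, |deriv (deriv φ) x - n x - φ x| ≤ K * (Φb + H) * |φ x| := by
  obtain ⟨K, hK, r, hr, hlin⟩ := exists_abs_sub_add_sub_le hg hg'
  obtain ⟨ρ, hρ, hρr, hKρ⟩ : ∃ ρ > 0, 2 * ρ ≤ r ∧ K * (2 * ρ) ≤ 1 / 2 := by
    refine ⟨min (r / 2) (1 / (4 * K)), by positivity, ?_, ?_⟩
    · linarith [min_le_left (r / 2) (1 / (4 * K))]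
    · have := (le_div_iff₀ (by positivity)).1 (min_le_right (r / 2) (1 / (4 * K)))
      linarith
  have hslope : AntitoneOn (fun s => g s + 1 / 2 * s) (Icc (-(2 * ρ)) (2 * ρ)) := by
    intro a ha b hb hab
    have herr : g b - g a + (b - a) ≤ 1 / 2 * (b - a) :=
      calc g b - g a + (b - a) ≤ K * (2 * ρ) * |b - a| :=
            (le_abs_self _).trans (hlin _ hρr a ha b hb)
        _ ≤ 1 / 2 * (b - a) := by rw [abs_of_nonneg (sub_nonneg.2 hab)]; gcongr
    simp only
    linarith
  refine ⟨ρ / 3, by positivity, 2 * K, by positivity, fun {Φ n φ Φb H} h hΦ hn hδ x hx => ?_⟩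
  have hΦb : 0 ≤ Φb := (abs_nonneg _).trans (hΦ x hx)
  have hH : 0 ≤ H := (abs_nonneg _).trans (hn x hx)
  have hφ : |φ x| ≤ H / (1 / 2) :=
    h.abs_le_div hanti hslope (by norm_num) (by linarith)
      (fun y hy => (hΦ y hy).trans (by linarith)) hn hx.le
  have hΦφ : |Φ x + φ x| ≤ 2 * (Φb + H) := (abs_add_le _ _).trans (by linarith [hΦ x hx])
  have hΦx : |Φ x| ≤ 2 * (Φb + H) := by linarith [hΦ x hx]
  have herr := hlin (2 * (Φb + H)) (by linarith) (Φ x) (abs_le.1 hΦx) (Φ x + φ x) (abs_le.1 hΦφ)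
  rw [add_sub_cancel_left] at herr
  calc |deriv (deriv φ) x - n x - φ x| = |g (Φ x + φ x) - g (Φ x) + φ x| := by
        rw [h.deriv_deriv_eq x hx, ← abs_neg]
        ring_nf
    _ ≤ K * (2 * (Φb + H)) * |φ x| := herr
    _ = 2 * K * (Φb + H) * |φ x| := by ring

section WeightedMeasure

variable {β : ℝ}

theorem lintegral_ofReal_expWeightedMeasure (F : ℝ → ℝ) :
    ∫⁻ x, ENNReal.ofReal (F x) ∂expWeightedMeasure β = expWeightedLIntegral β F := by
  rw [expWeightedMeasure, lintegral_withDensity_eq_lintegral_mul_non_measurable _ (by fun_prop)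
    (Eventually.of_forall fun _ => ENNReal.ofReal_lt_top)]
  simp only [Pi.mul_apply, ← ENNReal.ofReal_mul (exp_pos _).le, expWeightedLIntegral]

theorem integrable_expWeightedMeasure_iff {f : ℝ → ℝ} :
    Integrable f (expWeightedMeasure β) ↔ IntegrableOn (fun x => exp (β * x) * f x) (Ioi 0) := by
  rw [expWeightedMeasure, integrable_withDensity_iff_integrable_smul' (by fun_prop)
    (Eventually.of_forall fun _ => ENNReal.ofReal_lt_top)]
  simp only [ENNReal.toReal_ofReal (exp_pos _).le, smul_eq_mul, IntegrableOn]

theorem integral_expWeightedMeasure (f : ℝ → ℝ) :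
    ∫ x, f x ∂expWeightedMeasure β = ∫ x in Ioi (0 : ℝ), exp (β * x) * f x := by
  rw [expWeightedMeasure, integral_withDensity_eq_integral_toReal_smul (by fun_prop)
    (Eventually.of_forall fun _ => ENNReal.ofReal_lt_top)]
  simp only [ENNReal.toReal_ofReal (exp_pos _).le, smul_eq_mul]

theorem restrict_Ioi_le_expWeightedMeasure (hβ : 0 ≤ β) :
    volume.restrict (Ioi 0) ≤ expWeightedMeasure β := by
  conv_lhs => rw [← withDensity_one (μ := volume.restrict (Ioi (0 : ℝ)))]
  refine withDensity_mono ?_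
  filter_upwards [ae_restrict_mem measurableSet_Ioi] with x hx
  exact ENNReal.one_le_ofReal.2 (one_le_exp (mul_nonneg hβ (le_of_lt hx)))

theorem ae_expWeightedMeasure_of_forall_pos {p : ℝ → Prop} (h : ∀ x > 0, p x) :
    ∀ᵐ x ∂expWeightedMeasure β, p x :=
  (withDensity_absolutelyContinuous _ _).ae_le (ae_restrict_of_forall_mem measurableSet_Ioi h)

theorem memLp_two_expWeightedMeasure {f F : ℝ → ℝ} (hf : Continuous f)
    (hle : ∀ x, f x ^ 2 ≤ F x) (hF : expWeightedLIntegral β F < ⊤) :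
    MemLp f 2 (expWeightedMeasure β) := by
  rw [← lintegral_ofReal_expWeightedMeasure] at hF
  refine (memLp_two_iff_integrable_sq hf.aestronglyMeasurable).2 ?_
  refine (lintegral_ofReal_ne_top_iff_integrable (hf.pow 2).aestronglyMeasurable
    (Eventually.of_forall fun x => sq_nonneg (f x))).1 ?_
  exact (lt_of_le_of_lt (lintegral_mono fun x => ENNReal.ofReal_le_ofReal (hle x)) hF).ne

theorem expWeightedLIntegral_sq {f : ℝ → ℝ} (hf : MemLp f 2 (expWeightedMeasure β)) :
    expWeightedLIntegral β (fun x => f x ^ 2) =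
      ENNReal.ofReal (∫ x, f x ^ 2 ∂expWeightedMeasure β) := by
  rw [← lintegral_ofReal_expWeightedMeasure, ofReal_integral_eq_lintegral_ofReal hf.integrable_sq
    (Eventually.of_forall fun x => sq_nonneg (f x))]

theorem integral_sq_add_integral_mul_expWeightedMeasure {u u' u'' : ℝ → ℝ} (hu0 : u 0 = 0)
    (hu : ∀ x ∈ Ici 0, HasDerivAt u (u' x) x) (hu' : ∀ x ∈ Ici 0, HasDerivAt u' (u'' x) x)
    (hu2 : MemLp u 2 (expWeightedMeasure β)) (hu2' : MemLp u' 2 (expWeightedMeasure β))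
    (hu2'' : MemLp u'' 2 (expWeightedMeasure β)) :
    ∫ x, u' x ^ 2 ∂expWeightedMeasure β + ∫ x, u x * u'' x ∂expWeightedMeasure β =
      β ^ 2 / 2 * ∫ x, u x ^ 2 ∂expWeightedMeasure β := by
  set F := fun x => exp (β * x) * (u x * u' x - β / 2 * u x ^ 2)
  set f' := fun x => u' x ^ 2 + u x * u'' x - β ^ 2 / 2 * u x ^ 2
  have hderiv : ∀ x ∈ Ici 0, HasDerivAt F (exp (β * x) * f' x) x := fun x hx => by
    have hexp : HasDerivAt (fun x => exp (β * x)) (exp (β * x) * β) x := by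
      simpa using ((hasDerivAt_id x).const_mul β).exp
    refine (hexp.fun_mul (((hu x hx).fun_mul (hu' x hx)).fun_sub
      (((hu x hx).fun_pow 2).const_mul (β / 2)))).congr_deriv ?_
    simp only [f', Nat.cast_ofNat, Nat.add_one_sub_one, pow_one]
    ring
  have hmul : Integrable (fun x => u x * u'' x) (expWeightedMeasure β) := hu2.integrable_mul hu2''
  have hsum : Integrable (fun x => u' x ^ 2 + u x * u'' x) (expWeightedMeasure β) :=
    hu2'.integrable_sq.add hmul
  have hF : IntegrableOn F (Ioi 0) := integrable_expWeightedMeasure_iff.1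
    ((hu2.integrable_mul hu2').sub (hu2.integrable_sq.const_mul (β / 2)))
  have hF' : IntegrableOn (fun x => exp (β * x) * f' x) (Ioi 0) :=
    integrable_expWeightedMeasure_iff.1 (hsum.sub (hu2.integrable_sq.const_mul (β ^ 2 / 2)))
  have hzero : ∫ x, f' x ∂expWeightedMeasure β = 0 := by
    rw [integral_expWeightedMeasure, integral_Ioi_of_hasDerivAt_of_integrableOn hderiv hF' hF]
    simp [F, hu0]
  have hsplit : ∫ x, f' x ∂expWeightedMeasure β = ∫ x, u' x ^ 2 ∂expWeightedMeasure β +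
      ∫ x, u x * u'' x ∂expWeightedMeasure β - β ^ 2 / 2 * ∫ x, u x ^ 2 ∂expWeightedMeasure β := by
    rw [integral_sub hsum (hu2.integrable_sq.const_mul _), integral_const_mul,
      integral_add hu2'.integrable_sq hmul]
  linarith

end WeightedMeasure

section EnergyEstimates

variable {α : Type*} [MeasurableSpace α] {μ : Measure α} {u v n : α → ℝ} {k : ℝ}

theorem integral_sq_le_integral_mul_add_integral_sq (hu : MemLp u 2 μ) (hv : MemLp v 2 μ)
    (hn : MemLp n 2 μ) (hk : ∀ᵐ x ∂μ, |v x - n x - u x| ≤ k * |u x|) {θ : ℝ} (hθ : 0 ≤ θ) :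
    (2 * θ - 1 - 2 * θ * k) * ∫ x, u x ^ 2 ∂μ ≤
      2 * θ * ∫ x, u x * v x ∂μ + θ ^ 2 * ∫ x, n x ^ 2 ∂μ := by
  have huv : Integrable (fun x => u x * v x) μ := hu.integrable_mul hv
  simp only [← integral_const_mul]
  rw [← integral_add (huv.const_mul _) (hn.integrable_sq.const_mul _)]
  refine integral_mono_ae (hu.integrable_sq.const_mul _)
    ((huv.const_mul _).add (hn.integrable_sq.const_mul _)) ?_
  filter_upwards [hk] with x hx
  have herr : -(k * u x ^ 2) ≤ u x * (v x - n x - u x) := by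
    refine neg_le_of_abs_le ?_
    calc |u x * (v x - n x - u x)| ≤ |u x| * (k * |u x|) := by rw [abs_mul]; gcongr
      _ = k * u x ^ 2 := by rw [← sq_abs (u x)]; ring
  linarith [mul_le_mul_of_nonneg_left herr hθ, sq_nonneg (u x + θ * n x)]

theorem integral_sq_le_of_abs_sub_le (hu : MemLp u 2 μ) (hv : MemLp v 2 μ) (hn : MemLp n 2 μ)
    (hk0 : 0 ≤ k) (hk : ∀ᵐ x ∂μ, |v x - n x - u x| ≤ k * |u x|) :
    ∫ x, v x ^ 2 ∂μ ≤ 2 * ∫ x, u x * v x ∂μ + (1 + k) * ∫ x, n x ^ 2 ∂μ +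
      (k + k ^ 2 - 1) * ∫ x, u x ^ 2 ∂μ := by
  have huv : Integrable (fun x => u x * v x) μ := hu.integrable_mul hv
  have hsum : Integrable (fun x => 2 * (u x * v x) + (1 + k) * n x ^ 2) μ :=
    (huv.const_mul 2).add (hn.integrable_sq.const_mul (1 + k))
  simp only [← integral_const_mul]
  rw [← integral_add (huv.const_mul _) (hn.integrable_sq.const_mul _),
    ← integral_add hsum (hu.integrable_sq.const_mul _)]
  refine integral_mono_ae hv.integrable_sq (hsum.add (hu.integrable_sq.const_mul _)) ?_
  filter_upwards [hk] with x hx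
  have hdiff : |v x - u x| ≤ |n x| + k * |u x| :=
    calc |v x - u x| = |n x + (v x - n x - u x)| := by ring_nf
      _ ≤ |n x| + k * |u x| := (abs_add_le _ _).trans (by gcongr)
  have hsq : (v x - u x) ^ 2 ≤ (|n x| + k * |u x|) ^ 2 :=
    sq_le_sq' (abs_le.1 hdiff).1 (abs_le.1 hdiff).2
  have hcross : 2 * k * (|n x| * |u x|) ≤ k * (n x ^ 2 + u x ^ 2) := by
    rw [← sq_abs (n x), ← sq_abs (u x)]
    linarith [mul_nonneg hk0 (sq_nonneg (|n x| - |u x|))]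
  have hexpand : (|n x| + k * |u x|) ^ 2 =
      n x ^ 2 + 2 * k * (|n x| * |u x|) + k ^ 2 * u x ^ 2 := by
    rw [← sq_abs (n x), ← sq_abs (u x)]
    ring
  linarith

end EnergyEstimates

section WeightedEnergyEstimates

variable {β k : ℝ} {u u' u'' n : ℝ → ℝ}

theorem integral_expWeightedMeasure_energy_estimates
    (hβ : β ^ 2 < 2) (hk0 : 0 ≤ k) (hk1 : 4 * (1 + bohmEta β) * k ≤ 1) (hu0 : u 0 = 0)
    (hu : ∀ x ∈ Ici 0, HasDerivAt u (u' x) x) (hu' : ∀ x ∈ Ici 0, HasDerivAt u' (u'' x) x)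
    (hu2 : MemLp u 2 (expWeightedMeasure β)) (hu2' : MemLp u' 2 (expWeightedMeasure β))
    (hu2'' : MemLp u'' 2 (expWeightedMeasure β)) (hn : MemLp n 2 (expWeightedMeasure β))
    (hk : ∀ᵐ x ∂expWeightedMeasure β, |u'' x - n x - u x| ≤ k * |u x|) :
    ∫ x, u x ^ 2 ∂expWeightedMeasure β
        + 2 * (1 + bohmEta β) * ∫ x, u' x ^ 2 ∂expWeightedMeasure β
      ≤ (1 + bohmEta β) ^ 2 * ∫ x, n x ^ 2 ∂expWeightedMeasure β
        + 9 * (1 + bohmEta β) ^ 3 * k * ∫ x, n x ^ 2 ∂expWeightedMeasure β ∧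
    ∫ x, u'' x ^ 2 ∂expWeightedMeasure β
      ≤ (1 + β ^ 2 * (1 + bohmEta β) ^ 2) * ∫ x, n x ^ 2 ∂expWeightedMeasure β
        + 9 * (1 + bohmEta β) ^ 3 * k * ∫ x, n x ^ 2 ∂expWeightedMeasure β := by
  have hθβ := one_add_bohmEta_mul_sq hβ
  have hθ : 1 ≤ 1 + bohmEta β := le_add_of_nonneg_right (bohmEta_nonneg hβ)
  have hidentity := integral_sq_add_integral_mul_expWeightedMeasure hu0 hu hu' hu2 hu2' hu2''
  have htest := integral_sq_le_integral_mul_add_integral_sq hu2 hu2'' hn hk (zero_le_one.trans hθ)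
  have hexpand := integral_sq_le_of_abs_sub_le hu2 hu2'' hn hk0 hk
  have hP : 0 ≤ ∫ x, u x ^ 2 ∂expWeightedMeasure β := integral_nonneg fun x => sq_nonneg _
  have hD : 0 ≤ ∫ x, u' x ^ 2 ∂expWeightedMeasure β := integral_nonneg fun x => sq_nonneg _
  have hN : 0 ≤ ∫ x, n x ^ 2 ∂expWeightedMeasure β := integral_nonneg fun x => sq_nonneg _
  set P := ∫ x, u x ^ 2 ∂expWeightedMeasure β
  set D := ∫ x, u' x ^ 2 ∂expWeightedMeasure β
  set N := ∫ x, n x ^ 2 ∂expWeightedMeasure β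
  set θ := 1 + bohmEta β with hθ_def
  have hbasic : (1 - 2 * θ * k) * P + 2 * θ * D ≤ θ ^ 2 * N := by
    linear_combination htest + 2 * θ * hidentity + P * hθβ + 2 * P * hθ_def
  have hD' : 0 ≤ 2 * θ * D := by positivity
  have hrough : P ≤ 2 * θ ^ 2 * N := by
    linarith [mul_le_mul_of_nonneg_right hk1 hP]
  have hfirst : P + 2 * θ * D ≤ θ ^ 2 * N + 4 * θ ^ 3 * k * N := by
    linear_combination hbasic + 2 * θ * k * hrough
  have herror : 0 ≤ θ ^ 3 * k * N := by positivity
  refine ⟨by linarith, ?_⟩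
  have hβP : β ^ 2 * P ≤ β ^ 2 * θ ^ 2 * N + 8 * θ ^ 3 * k * N := by
    have hP_le : P ≤ θ ^ 2 * N + 4 * (θ ^ 3 * k * N) := by linarith
    linarith [mul_le_mul_of_nonneg_left hP_le (sq_nonneg β),
      mul_le_mul_of_nonneg_right hβ.le herror]
  have hkP : (k + k ^ 2 - 1) * P ≤ 0 := by
    have : 4 * k ≤ 1 := by linarith [mul_le_mul_of_nonneg_right hθ hk0]
    refine mul_nonpos_of_nonpos_of_nonneg ?_ hP
    nlinarith
  have hkN : k * N ≤ θ ^ 3 * k * N := by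
    rw [mul_assoc]
    exact le_mul_of_one_le_left (by positivity) (one_le_pow₀ hθ)
  linarith

theorem expWeightedLIntegral_energy_estimates {c : ℝ} (hβ : β ^ 2 < 2) (hk0 : 0 ≤ k)
    (hk1 : 4 * (1 + bohmEta β) * k ≤ 1) (hkc : 9 * (1 + bohmEta β) ^ 3 * k ≤ c)
    (hu : ContDiff ℝ 2 u) (hu0 : u 0 = 0)
    (hfin : expWeightedLIntegral β
      (fun x => u x ^ 2 + deriv u x ^ 2 + deriv (deriv u) x ^ 2) < ⊤)
    (hn : MemLp n 2 (expWeightedMeasure β))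
    (hk : ∀ x > 0, |deriv (deriv u) x - n x - u x| ≤ k * |u x|) :
    expWeightedLIntegral β (fun x => u x ^ 2)
        + ENNReal.ofReal (2 * (1 + bohmEta β)) * expWeightedLIntegral β (fun x => deriv u x ^ 2)
      ≤ ENNReal.ofReal ((1 + bohmEta β) ^ 2) * expWeightedLIntegral β (fun x => n x ^ 2)
        + ENNReal.ofReal c * expWeightedLIntegral β (fun x => n x ^ 2) ∧
    expWeightedLIntegral β (fun x => deriv (deriv u) x ^ 2)
      ≤ ENNReal.ofReal (1 + β ^ 2 * (1 + bohmEta β) ^ 2) *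
          expWeightedLIntegral β (fun x => n x ^ 2)
        + ENNReal.ofReal c * expWeightedLIntegral β (fun x => n x ^ 2) := by
  have hη := bohmEta_nonneg hβ
  have hc : 0 ≤ c := le_trans (by positivity) hkc
  have hu' : ContDiff ℝ 1 (deriv u) := hu.deriv'
  have hu2 : MemLp u 2 (expWeightedMeasure β) :=
    memLp_two_expWeightedMeasure hu.continuous (fun x => by nlinarith) hfin
  have hu2' : MemLp (deriv u) 2 (expWeightedMeasure β) :=
    memLp_two_expWeightedMeasure hu'.continuous (fun x => by nlinarith) hfin
  have hu2'' : MemLp (deriv (deriv u)) 2 (expWeightedMeasure β) :=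
    memLp_two_expWeightedMeasure (hu'.continuous_deriv le_rfl) (fun x => by nlinarith) hfin
  obtain ⟨hfirst, hsecond⟩ := integral_expWeightedMeasure_energy_estimates hβ hk0 hk1 hu0
    (fun x _ => (hu.differentiable two_ne_zero x).hasDerivAt)
    (fun x _ => (hu'.differentiable one_ne_zero x).hasDerivAt)
    hu2 hu2' hu2'' hn (ae_expWeightedMeasure_of_forall_pos hk)
  have hcN := mul_le_mul_of_nonneg_right hkc
    (integral_nonneg fun x => sq_nonneg (n x) : 0 ≤ ∫ x, n x ^ 2 ∂expWeightedMeasure β)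
  simp only [expWeightedLIntegral_sq hu2, expWeightedLIntegral_sq hu2',
    expWeightedLIntegral_sq hu2'', expWeightedLIntegral_sq hn]
  constructor
  all_goals
    repeat rw [← ENNReal.ofReal_mul (by positivity)]
    repeat rw [← ENNReal.ofReal_add (by positivity) (by positivity)]
    exact ENNReal.ofReal_le_ofReal (by linarith)

end WeightedEnergyEstimates

theorem elliptic_sharp_weighted_estimates_general {ne : ℝ → ℝ} (hne : ContDiffAt ℝ 2 ne 0)
    (hanti : Antitone ne) (hne1 : deriv ne 0 = -1) {b : ℝ} (hb : b ^ 2 < 2) :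
    ∃ δ₀ > 0, ∃ C > 0, ∀ β ∈ Icc 0 b, ∀ (Φb : ℝ) (Φs n φ : ℝ → ℝ),
      (∀ x > 0, |Φs x| ≤ Φb) → ContDiff ℝ 1 n →
      expWeightedLIntegral β (fun x => n x ^ 2 + deriv n x ^ 2) < ⊤ →
      IsPotentialPerturbation ne Φs n φ →
      expWeightedLIntegral β
        (fun x => φ x ^ 2 + deriv φ x ^ 2 + deriv (deriv φ) x ^ 2) < ⊤ →
      Φb + halfLineH1Norm n ≤ δ₀ →
      expWeightedLIntegral β (fun x => φ x ^ 2)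
          + ENNReal.ofReal (2 * (1 + bohmEta β)) *
            expWeightedLIntegral β (fun x => deriv φ x ^ 2)
        ≤ ENNReal.ofReal ((1 + bohmEta β) ^ 2) * expWeightedLIntegral β (fun x => n x ^ 2)
          + ENNReal.ofReal (C * (Φb + halfLineH1Norm n)) *
            expWeightedLIntegral β (fun x => n x ^ 2) ∧
      expWeightedLIntegral β (fun x => deriv (deriv φ) x ^ 2)
        ≤ ENNReal.ofReal (1 + β ^ 2 * (1 + bohmEta β) ^ 2) *
            expWeightedLIntegral β (fun x => n x ^ 2)
          + ENNReal.ofReal (C * (Φb + halfLineH1Norm n)) *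
            expWeightedLIntegral β (fun x => n x ^ 2) := by
  obtain ⟨δ, hδ, K, hK, hclose⟩ := exists_abs_deriv_deriv_sub_le hne hanti hne1
  have hηb := bohmEta_nonneg hb
  refine ⟨min δ (1 / (4 * (1 + bohmEta b) * K)), by positivity, 9 * (1 + bohmEta b) ^ 3 * K,
    by positivity, fun β hβ Φb Φs n φ hΦ hn hnint h hφint hsmall => ?_⟩
  obtain ⟨hsmallδ, hsmallK⟩ := le_min_iff.1 hsmall
  have hβb : β ^ 2 ≤ b ^ 2 := pow_le_pow_left₀ hβ.1 hβ.2 2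
  have hβ2 : β ^ 2 < 2 := hβb.trans_lt hb
  have hη := bohmEta_nonneg hβ2
  have hηle := bohmEta_le_bohmEta hb hβb
  have hn2 : MemLp n 2 (expWeightedMeasure β) :=
    memLp_two_expWeightedMeasure hn.continuous (fun x => by nlinarith) hnint
  have hn2' : MemLp (deriv n) 2 (expWeightedMeasure β) :=
    memLp_two_expWeightedMeasure (hn.continuous_deriv le_rfl) (fun x => by nlinarith) hnint
  have hvol := restrict_Ioi_le_expWeightedMeasure hβ.1
  have hnH (x : ℝ) (hx : x > 0) : |n x| ≤ halfLineH1Norm n :=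
    abs_le_halfLineH1Norm (hn.differentiable one_ne_zero) (hn2.mono_measure hvol)
      (hn2'.mono_measure hvol) hx.le
  have hS : 0 ≤ Φb + halfLineH1Norm n :=
    add_nonneg ((abs_nonneg _).trans (hΦ 1 one_pos)) (sqrt_nonneg _)
  refine expWeightedLIntegral_energy_estimates hβ2 (k := K * (Φb + halfLineH1Norm n))
    (by positivity) ?_ ?_ h.contDiff h.map_zero hφint hn2 (hclose h hΦ hnH hsmallδ)
  · calc 4 * (1 + bohmEta β) * (K * (Φb + halfLineH1Norm n))
        ≤ 4 * (1 + bohmEta b) * (K * (Φb + halfLineH1Norm n)) := by gcongr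
      _ ≤ 1 := by
        have := (le_div_iff₀ (by positivity)).1 hsmallK
        linarith
  · rw [← mul_assoc]
    gcongr

/-- sharp-constant weighted elliptic estimates, with `η(β) = β²/(2−β²)`:
`‖e^{βx/2}φ‖² + 2(1+η)‖e^{βx/2}∂_xφ‖² ≤ (1+η)²‖e^{βx/2}n‖² + C(Φ_b+‖n‖_{H¹})‖e^{βx/2}n‖²`
and `‖e^{βx/2}∂_{xx}φ‖² ≤ (1+β²(1+η)²)‖e^{βx/2}n‖² + C(Φ_b+‖n‖_{H¹})‖e^{βx/2}n‖²`,
where `δ₀, C` are independent of `β ∈ (0,1)`. -/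
theorem elliptic_sharp_weighted_estimates
    (ne : ℝ → ℝ) (hne : ContDiff ℝ 2 ne) (hne0 : ne 0 = 1)
    (hne1 : deriv ne 0 = -1) (hne' : ∀ s, deriv ne s < 0) :
    ∃ δ₀ > 0, ∃ C > 0, ∀ β : ℝ, 0 < β → β < 1 →
      ∀ (Φb : ℝ) (Φs n φ : ℝ → ℝ),
      0 < Φb → ContDiff ℝ 1 Φs →
      (∀ x ≥ (0:ℝ), 0 ≤ Φs x ∧ Φs x ≤ Φb ∧ |deriv Φs x| ≤ Φb) →
      ContDiff ℝ 1 n →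
      (∫⁻ x in Set.Ioi (0:ℝ), ENNReal.ofReal
        (Real.exp (β*x) * ((n x)^2 + (deriv n x)^2))) < ⊤ →
      ContDiff ℝ 2 φ →
      (∀ x > (0:ℝ), deriv (deriv φ) x = n x - (ne (Φs x + φ x) - ne (Φs x))) →
      φ 0 = 0 → Tendsto φ atTop (nhds 0) →
      (∫⁻ x in Set.Ioi (0:ℝ), ENNReal.ofReal (Real.exp (β*x) *
        ((φ x)^2 + (deriv φ x)^2 + (deriv^[2] φ x)^2))) < ⊤ →
      Φb + Real.sqrt (∫ x in Set.Ioi (0:ℝ), ((n x)^2 + (deriv n x)^2)) ≤ δ₀ →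
      ((∫⁻ x in Set.Ioi (0:ℝ), ENNReal.ofReal (Real.exp (β*x) * (φ x)^2))
          + ENNReal.ofReal (2 * (1 + β^2/(2-β^2))) *
            ∫⁻ x in Set.Ioi (0:ℝ), ENNReal.ofReal (Real.exp (β*x) * (deriv φ x)^2)
        ≤ ENNReal.ofReal ((1 + β^2/(2-β^2))^2) *
            (∫⁻ x in Set.Ioi (0:ℝ), ENNReal.ofReal (Real.exp (β*x) * (n x)^2))
          + ENNReal.ofReal (C * (Φb +
              Real.sqrt (∫ x in Set.Ioi (0:ℝ), ((n x)^2 + (deriv n x)^2)))) *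
            ∫⁻ x in Set.Ioi (0:ℝ), ENNReal.ofReal (Real.exp (β*x) * (n x)^2)) ∧
      ((∫⁻ x in Set.Ioi (0:ℝ), ENNReal.ofReal (Real.exp (β*x) * (deriv^[2] φ x)^2))
        ≤ ENNReal.ofReal (1 + β^2 * (1 + β^2/(2-β^2))^2) *
            (∫⁻ x in Set.Ioi (0:ℝ), ENNReal.ofReal (Real.exp (β*x) * (n x)^2))
          + ENNReal.ofReal (C * (Φb +
              Real.sqrt (∫ x in Set.Ioi (0:ℝ), ((n x)^2 + (deriv n x)^2)))) *
            ∫⁻ x in Set.Ioi (0:ℝ), ENNReal.ofReal (Real.exp (β*x) * (n x)^2)) := by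
  obtain ⟨δ₀, hδ₀, C, hC, h⟩ := elliptic_sharp_weighted_estimates_general (b := 1)
    hne.contDiffAt (strictAnti_of_deriv_neg hne').antitone hne1 (by norm_num)
  refine ⟨δ₀, hδ₀, C, hC, fun β hβ0 hβ1 Φb Φs n φ _ _ hΦ hn hnint hφ hode h0 hlim hφint => ?_⟩
  exact h β ⟨hβ0.le, hβ1.le⟩ Φb Φs n φ
    (fun x hx => (abs_of_nonneg (hΦ x hx.le).1).trans_le (hΦ x hx.le).2.1) hn hnint
    ⟨hφ, hode, h0, hlim⟩ hφint
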